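/- arXiv:2409.00322 — 5 statements merged into one kernel-verified Lean document; each statement's English description precedes it below -/
import Mathlib

section
/- For every ε > 0, for all neighboring datasets h and h̃, and for every r ∈ R, the exponential mechanism satisfies P_h(r) ≤ e^ε · P_{h̃}(r); consequently, for every subset S ⊆ R, P_h(S) ≤ e^ε · P_{h̃}(S) (i.e., the exponential mechanism is ε-differentially private). -/
/-- The exponential mechanism: on input dataset `h`, outputs `r` with probability
proportional to `exp (ε * u (h, r) / (2 * Δ))`. -/
noncomputable def expMech {X R : Type*} [Fintype R]
    (u : (X → ℕ) × R → ℝ) (Δ ε : ℝ) (h : X → ℕ) (r : R) : ℝ :=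
  Real.exp (ε * u (h, r) / (2 * Δ)) / ∑ r' : R, Real.exp (ε * u (h, r') / (2 * Δ))

/-- The softmax (Gibbs) weights of a real-valued score on a finite type, at unit temperature;
the exponential mechanism is the softmax of the rescaled utility. -/
noncomputable def softmax {ι : Type*} [Fintype ι] (f : ι → ℝ) (i : ι) : ℝ :=
  Real.exp (f i) / ∑ j, Real.exp (f j)

/-- After cross-multiplication both sides are sums over `j`, and the inequality holds term by
term. Only the oscillation of `f - g` enters because softmax is invariant under adding a constant
to the score. -/
theorem softmax_le_exp_mul_softmax {ι : Type*} [Fintype ι] {f g : ι → ℝ} {c : ℝ} {i : ι}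
    (hfg : ∀ j, (f i - g i) - (f j - g j) ≤ c) :
    softmax f i ≤ Real.exp c * softmax g i := by
  have sum_exp_pos (k : ι → ℝ) : 0 < ∑ j, Real.exp (k j) :=
    Finset.sum_pos (fun j _ ↦ Real.exp_pos (k j)) ⟨i, Finset.mem_univ i⟩
  have term_le (j : ι) :
      Real.exp (f i) * Real.exp (g j) ≤ Real.exp c * Real.exp (g i) * Real.exp (f j) := by
    simp only [← Real.exp_add, Real.exp_le_exp]
    linarith [hfg j]
  rw [softmax, softmax, ← mul_div_assoc, div_le_div_iff₀ (sum_exp_pos f) (sum_exp_pos g),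
    Finset.mul_sum, Finset.mul_sum]
  exact Finset.sum_le_sum fun j _ ↦ term_le j

theorem expMech_eq_softmax {X R : Type*} [Fintype R] (u : (X → ℕ) × R → ℝ) (Δ ε : ℝ)
    (h : X → ℕ) : expMech u Δ ε h = softmax fun r ↦ ε * u (h, r) / (2 * Δ) :=
  rfl

theorem expMech_privacy_general {X R : Type*} [Fintype R]
    (u : (X → ℕ) × R → ℝ) (Δ : ℝ) (hΔ : 0 < Δ) (ε : ℝ) (hε : 0 ≤ ε) (h h' : X → ℕ)
    (hosc : ∀ r r' : R, (u (h, r) - u (h', r)) - (u (h, r') - u (h', r')) ≤ 2 * Δ) :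
    (∀ r : R, expMech u Δ ε h r ≤ Real.exp ε * expMech u Δ ε h' r) ∧
    (∀ S : Finset R, ∑ r ∈ S, expMech u Δ ε h r ≤ Real.exp ε * ∑ r ∈ S, expMech u Δ ε h' r) := by
  have pointwise (r : R) : expMech u Δ ε h r ≤ Real.exp ε * expMech u Δ ε h' r := by
    simp only [expMech_eq_softmax]
    refine softmax_le_exp_mul_softmax fun r' ↦ ?_
    calc
      (ε * u (h, r) / (2 * Δ) - ε * u (h', r) / (2 * Δ)) -
            (ε * u (h, r') / (2 * Δ) - ε * u (h', r') / (2 * Δ))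
          = ε * (((u (h, r) - u (h', r)) - (u (h, r') - u (h', r'))) / (2 * Δ)) := by ring
      _ ≤ ε := mul_le_of_le_one_right hε (div_le_one_of_le₀ (hosc r r') (by positivity))
  refine ⟨pointwise, fun S ↦ ?_⟩
  rw [Finset.mul_sum]
  exact Finset.sum_le_sum fun r _ ↦ pointwise r

/-- Privacy of the exponential mechanism: for neighboring datasets the output
probabilities (of single outcomes, and hence of any set of outcomes) differ by at
most a factor `e^ε`. -/
theorem expMech_privacy {X R : Type*} [Fintype X] [Nonempty X] [Fintype R] [Nonempty R]
    (u : (X → ℕ) × R → ℝ) (Δ : ℝ) (hΔ : 0 < Δ)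
    (hsens : ∀ h h' : X → ℕ, (∑ x : X, |(h x : ℤ) - (h' x : ℤ)|) = 1 →
      ∀ r : R, |u (h, r) - u (h', r)| ≤ Δ)
    (ε : ℝ) (hε : 0 < ε)
    (h h' : X → ℕ) (hneighbor : (∑ x : X, |(h x : ℤ) - (h' x : ℤ)|) = 1) :
    (∀ r : R, expMech u Δ ε h r ≤ Real.exp ε * expMech u Δ ε h' r) ∧
    (∀ S : Finset R, ∑ r ∈ S, expMech u Δ ε h r ≤ Real.exp ε * ∑ r ∈ S, expMech u Δ ε h' r) := by
  refine expMech_privacy_general u Δ hΔ ε hε.le h h' fun r r' ↦ ?_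
  linarith [abs_le.mp (hsens h h' hneighbor r), abs_le.mp (hsens h h' hneighbor r')]
end

section
/- For every ε > 0, every dataset h, and every β > 0, the exponential mechanism satisfies P_h({ r ∈ R : u(h,r) ≤ u_OPT − (2Δ/ε)·ln(|R|/β) }) ≤ β, where u_OPT = max_{r∈R} u(h,r). -/
open scoped Classical

/-
Bounding the normalizing sum below by the single term of an optimal `s`, an outcome whose utility
falls short of the optimum by `(2Δ/ε) * t` has probability at most `exp (-t)`. A union bound over
the at most `|R|` such outcomes gives `|R| * exp (-t)`, which equals `β` for `t = ln (|R|/β)`.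
-/

theorem exp_div_sum_exp_le_exp_sub {ι : Type*} {S : Finset ι} (f : ι → ℝ) (i : ι) {j : ι}
    (hj : j ∈ S) :
    Real.exp (f i) / ∑ k ∈ S, Real.exp (f k) ≤ Real.exp (f i - f j) := by
  have single_le_sum : Real.exp (f j) ≤ ∑ k ∈ S, Real.exp (f k) :=
    Finset.single_le_sum (f := fun k => Real.exp (f k)) (fun k _ => (Real.exp_pos _).le) hj
  rw [Real.exp_sub]
  gcongr

section Tail

variable {X R : Type*} [Fintype R] {u : (X → ℕ) × R → ℝ} {Δ ε : ℝ} {h : X → ℕ}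

theorem expMech_le_exp_neg (hΔ : 0 < Δ) (hε : 0 < ε) {r s : R} {t : ℝ}
    (hr : u (h, r) ≤ u (h, s) - (2 * Δ / ε) * t) :
    expMech u Δ ε h r ≤ Real.exp (-t) := by
  have exponent_le : ε * u (h, r) / (2 * Δ) ≤ ε * u (h, s) / (2 * Δ) - t :=
    calc ε * u (h, r) / (2 * Δ)
        ≤ ε * (u (h, s) - (2 * Δ / ε) * t) / (2 * Δ) := by gcongr
      _ = ε * u (h, s) / (2 * Δ) - t := by field_simp
  calc expMech u Δ ε h r
      ≤ Real.exp (ε * u (h, r) / (2 * Δ) - ε * u (h, s) / (2 * Δ)) :=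
        exp_div_sum_exp_le_exp_sub (fun r' => ε * u (h, r') / (2 * Δ)) r (Finset.mem_univ s)
    _ ≤ Real.exp (-t) := Real.exp_le_exp.mpr (by linarith)

theorem sum_expMech_le_card_mul_exp_neg (hΔ : 0 < Δ) (hε : 0 < ε) {S : Finset R} {s : R} {t : ℝ}
    (hS : ∀ r ∈ S, u (h, r) ≤ u (h, s) - (2 * Δ / ε) * t) :
    ∑ r ∈ S, expMech u Δ ε h r ≤ S.card * Real.exp (-t) := by
  rw [← nsmul_eq_mul]
  exact Finset.sum_le_card_nsmul S _ _ fun r hr => expMech_le_exp_neg hΔ hε (hS r hr)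

end Tail

theorem expMech_accuracy_general {X R : Type*} [Fintype R] [Nonempty R]
    (u : (X → ℕ) × R → ℝ) {Δ : ℝ} (hΔ : 0 < Δ) {ε : ℝ} (hε : 0 < ε) (h : X → ℕ)
    {β : ℝ} (hβ : 0 < β) :
    ∑ r ∈ Finset.univ.filter (fun r : R =>
        u (h, r) ≤ (Finset.univ.sup' Finset.univ_nonempty fun r' : R => u (h, r'))
          - (2 * Δ / ε) * Real.log ((Fintype.card R : ℝ) / β)),
      expMech u Δ ε h r ≤ β := by
  obtain ⟨s, -, s_optimal⟩ := Finset.exists_mem_eq_sup' (Finset.univ_nonempty (α := R))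
    fun r' => u (h, r')
  rw [s_optimal]
  have card_pos : (0 : ℝ) < Fintype.card R := Nat.cast_pos.mpr Fintype.card_pos
  calc ∑ r with u (h, r) ≤ u (h, s) - (2 * Δ / ε) * Real.log (Fintype.card R / β),
        expMech u Δ ε h r
      ≤ _ * Real.exp (-Real.log (Fintype.card R / β)) :=
        sum_expMech_le_card_mul_exp_neg hΔ hε fun r hr => (Finset.mem_filter.mp hr).2
    _ ≤ Fintype.card R * Real.exp (-Real.log (Fintype.card R / β)) := by
        gcongr
        exact Finset.card_le_univ _
    _ = Fintype.card R * (β / Fintype.card R) := by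
        rw [Real.exp_neg, Real.exp_log (div_pos card_pos hβ), inv_div]
    _ = β := mul_div_cancel₀ β card_pos.ne'

/-- Accuracy of the exponential mechanism: the probability that the selected element
has utility below `u_OPT - (2Δ/ε) * ln (|R|/β)` is at most `β`. -/
theorem expMech_accuracy {X R : Type*} [Fintype X] [Nonempty X] [Fintype R] [Nonempty R]
    (u : (X → ℕ) × R → ℝ) (Δ : ℝ) (hΔ : 0 < Δ)
    (hsens : ∀ h h' : X → ℕ, (∑ x : X, |(h x : ℤ) - (h' x : ℤ)|) = 1 →
      ∀ r : R, |u (h, r) - u (h', r)| ≤ Δ)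
    (ε : ℝ) (hε : 0 < ε) (h : X → ℕ) (β : ℝ) (hβ : 0 < β) :
    ∑ r ∈ Finset.univ.filter (fun r : R =>
        u (h, r) ≤ (Finset.univ.sup' Finset.univ_nonempty fun r' : R => u (h, r'))
          - (2 * Δ / ε) * Real.log ((Fintype.card R : ℝ) / β)),
      expMech u Δ ε h r ≤ β :=
  expMech_accuracy_general u hΔ hε h hβ
end

section
/- Suppose |m − q(h)| ≤ 2M, so that |c| ≤ 1 where c = (m − q(h))/(2M). Then the multiplicative-weights normalization constant satisfies Z ≤ 1 + c² + c·q(h)/M, and consequently ln Z ≤ c² + c·q(h)/M. -/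
/-! The inequality `exp x ≤ 1 + x + x²` holds for all `x ≤ 1`. Applied to `x = c * q` with `q² ≤ 1`
and averaged against the probability density `h / M`, it gives `Z ≤ 1 + c² + c * q(h) / M`; the
bound on `log Z` is then `log Z ≤ Z - 1`. -/

/-- The value of a query `q : X → {0,1}` on a dataset `h : X → ℝ`. -/
noncomputable def qVal {X : Type*} [Fintype X] (q h : X → ℝ) : ℝ :=
  ∑ x : X, h x * q x

open MeasureTheory

theorem exp_le_one_add_add_sq {x : ℝ} (hx : x ≤ 1) : Real.exp x ≤ 1 + x + x ^ 2 := by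
  rcases le_total (-1) x with hx' | hx'
  · linarith [(abs_le.1 (Real.abs_exp_sub_one_sub_id_le (abs_le.2 ⟨hx', hx⟩))).2]
  · have hexp : Real.exp x ≤ 1 := Real.exp_le_one_iff.2 (by linarith)
    nlinarith

section WeightedIntegral

variable {X : Type*} [MeasurableSpace X] {μ : Measure X} {h q : X → ℝ}

theorem integral_mul_exp_pos {f : X → ℝ} (hh : 0 ≤ᵐ[μ] h) (hpos : 0 < ∫ x, h x ∂μ)
    (hint : Integrable (fun x ↦ h x * Real.exp (f x)) μ) :
    0 < ∫ x, h x * Real.exp (f x) ∂μ := by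
  have hnonneg : 0 ≤ᵐ[μ] fun x ↦ h x * Real.exp (f x) :=
    hh.mono fun x hx ↦ mul_nonneg hx (Real.exp_pos _).le
  have hsupport : Function.support (fun x ↦ h x * Real.exp (f x)) = Function.support h := by
    ext x
    simp [Real.exp_ne_zero]
  rw [integral_pos_iff_support_of_nonneg_ae hnonneg hint, hsupport]
  exact (integral_pos_iff_support_of_nonneg_ae hh
    (Integrable.of_integral_ne_zero hpos.ne')).1 hpos

theorem integrable_mul_exp_of_le {f : X → ℝ} {b : ℝ} (hh : Integrable h μ)
    (hf : AEStronglyMeasurable f μ) (hfb : ∀ᵐ x ∂μ, f x ≤ b) :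
    Integrable (fun x ↦ h x * Real.exp (f x)) μ := by
  refine hh.mul_bdd (c := Real.exp b) (Real.continuous_exp.comp_aestronglyMeasurable hf) ?_
  filter_upwards [hfb] with x hx
  simpa only [Real.norm_eq_abs, Real.abs_exp] using Real.exp_le_exp.2 hx

theorem integral_mul_exp_mul_le {c : ℝ} (hh : 0 ≤ᵐ[μ] h) (hint : Integrable h μ)
    (hq : AEStronglyMeasurable q μ) (hq_abs : ∀ᵐ x ∂μ, |q x| ≤ 1)
    (hqc : ∀ᵐ x ∂μ, q x * c ≤ 1) :
    ∫ x, h x * Real.exp (q x * c) ∂μ ≤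
      (∫ x, h x ∂μ) * (1 + c ^ 2) + c * ∫ x, h x * q x ∂μ := by
  have hint_q : Integrable (fun x ↦ h x * q x) μ := hint.mul_bdd hq hq_abs
  calc
    ∫ x, h x * Real.exp (q x * c) ∂μ ≤ ∫ x, h x * (1 + c ^ 2) + c * (h x * q x) ∂μ := by
      refine integral_mono_ae (integrable_mul_exp_of_le hint (hq.mul_const c) hqc)
        ((hint.mul_const _).add (hint_q.const_mul c)) ?_
      filter_upwards [hh, hq_abs, hqc] with x hx hqx hqcx
      have hsq : (q x * c) ^ 2 ≤ c ^ 2 := by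
        rw [mul_pow]
        exact mul_le_of_le_one_left (sq_nonneg c) ((sq_le_one_iff_abs_le_one _).2 hqx)
      calc
        h x * Real.exp (q x * c) ≤ h x * (1 + q x * c + c ^ 2) :=
          mul_le_mul_of_nonneg_left (by linarith [exp_le_one_add_add_sq hqcx]) hx
        _ = h x * (1 + c ^ 2) + c * (h x * q x) := by ring
    _ = (∫ x, h x ∂μ) * (1 + c ^ 2) + c * ∫ x, h x * q x ∂μ := by
      rw [integral_add (hint.mul_const _) (hint_q.const_mul c), integral_mul_const,
        integral_const_mul]

theorem mw_normalization_bound_general {M c Z : ℝ} (hM : 0 < M) (hh : 0 ≤ᵐ[μ] h)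
    (hsum : ∫ x, h x ∂μ = M) (hq : AEStronglyMeasurable q μ) (hq_abs : ∀ᵐ x ∂μ, |q x| ≤ 1)
    (hqc : ∀ᵐ x ∂μ, q x * c ≤ 1) (hZ : Z = (1 / M) * ∫ x, h x * Real.exp (q x * c) ∂μ) :
    Z ≤ 1 + c ^ 2 + c * (∫ x, h x * q x ∂μ) / M ∧
      Real.log Z ≤ c ^ 2 + c * (∫ x, h x * q x ∂μ) / M := by
  have hpos : 0 < ∫ x, h x ∂μ := hsum ▸ hM
  have hint : Integrable h μ := .of_integral_ne_zero hpos.ne'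
  have hZ_le : Z ≤ 1 + c ^ 2 + c * (∫ x, h x * q x ∂μ) / M := by
    calc
      Z ≤ (1 / M) * (M * (1 + c ^ 2) + c * ∫ x, h x * q x ∂μ) := by
        rw [hZ, ← hsum]
        gcongr
        exact integral_mul_exp_mul_le hh hint hq hq_abs hqc
      _ = 1 + c ^ 2 + c * (∫ x, h x * q x ∂μ) / M := by field_simp
  have hZ_pos : 0 < Z := hZ ▸ mul_pos (one_div_pos.2 hM)
    (integral_mul_exp_pos hh hpos (integrable_mul_exp_of_le hint (hq.mul_const c) hqc))
  exact ⟨hZ_le, by linarith [Real.log_le_sub_one_of_pos hZ_pos]⟩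

end WeightedIntegral

/-- Bound on the multiplicative-weights normalization constant:
if `|m - q(h)| ≤ 2M`, then `Z ≤ 1 + c² + c·q(h)/M` and `ln Z ≤ c² + c·q(h)/M`. -/
theorem mw_normalization_bound {X : Type*} [Fintype X] [Nonempty X]
    (h : X → ℝ) (q : X → ℝ) (hq : ∀ x, q x = 0 ∨ q x = 1)
    (M : ℝ) (hM : 0 < M) (hpos : ∀ x, 0 < h x) (hsum : ∑ x : X, h x = M)
    (m : ℝ) (hm : |m - qVal q h| ≤ 2 * M)
    (c Z : ℝ) (hc : c = (m - qVal q h) / (2 * M))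
    (hZ : Z = (1 / M) * ∑ x : X, h x * Real.exp (q x * c)) :
    Z ≤ 1 + c ^ 2 + c * qVal q h / M ∧ Real.log Z ≤ c ^ 2 + c * qVal q h / M := by
  let : MeasurableSpace X := ⊤
  have hc_le : c ≤ 1 := hc ▸ div_le_one_of_le₀ ((le_abs_self _).trans hm) (by positivity)
  have hq_abs (x : X) : |q x| ≤ 1 := by rcases hq x with hx | hx <;> simp [hx]
  have hqc (x : X) : q x * c ≤ 1 := by rcases hq x with hx | hx <;> simp [hx, hc_le]
  simpa only [integral_count, qVal] using
    mw_normalization_bound_general (μ := Measure.count) hM (.of_forall fun x ↦ (hpos x).le)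
      (by rwa [integral_count]) measurable_from_top.aestronglyMeasurable
      (.of_forall hq_abs) (.of_forall hqc) (by rwa [integral_count])
end

section
/- The change in relative entropy under one multiplicative-weights update equals Ψ(f,h) − Ψ(f,h') = (c/M)·q(f) − ln Z, where c = (m − q(h))/(2M). -/
/-- Relative entropy of a dataset `f` of size `M` to a positive dataset `g` of the
same size (with the convention `0 · ln 0 = 0`). -/
noncomputable def relEnt {X : Type*} [Fintype X] (M : ℝ) (f g : X → ℝ) : ℝ :=
  (1 / M) * ∑ x : X, f x * Real.log (f x / g x)

theorem mul_log_div_sub_mul_log_div (a : ℝ) {b c : ℝ} (hb : b ≠ 0) (hc : c ≠ 0) :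
    a * Real.log (a / b) - a * Real.log (a / c) = a * Real.log (c / b) := by
  rcases eq_or_ne a 0 with rfl | ha
  · simp
  · rw [Real.log_div ha hb, Real.log_div ha hc, Real.log_div hc hb]
    ring

theorem log_mul_exp_div_div_self {a z : ℝ} (ha : a ≠ 0) (hz : z ≠ 0) (t : ℝ) :
    Real.log (a * Real.exp t / z / a) = t - Real.log z := by
  rw [div_right_comm, mul_div_cancel_left₀ _ ha, Real.log_div (Real.exp_ne_zero t) hz,
    Real.log_exp]

section RelEnt

variable {X : Type*} [Fintype X]

/-- The entropy of `f` itself cancels, leaving the `f`-average of a log-likelihood ratio, which is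
affine in the query when `g` is a multiplicative-weights update of `h`. -/
theorem relEnt_sub_relEnt (M : ℝ) (f : X → ℝ) {g h : X → ℝ} (hh : ∀ x, h x ≠ 0)
    (hg : ∀ x, g x ≠ 0) :
    relEnt M f h - relEnt M f g = (1 / M) * ∑ x, f x * Real.log (g x / h x) := by
  simp only [relEnt, ← mul_sub, ← Finset.sum_sub_distrib,
    mul_log_div_sub_mul_log_div _ (hh _) (hg _)]

theorem relEnt_sub_relEnt_mul_exp_div (M : ℝ) (f u : X → ℝ) {h : X → ℝ} {Z : ℝ}
    (hh : ∀ x, h x ≠ 0) (hZ : Z ≠ 0) :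
    relEnt M f h - relEnt M f (fun x ↦ h x * Real.exp (u x) / Z) =
      (1 / M) * (∑ x, f x * u x - (∑ x, f x) * Real.log Z) := by
  have tilt_ne_zero (x : X) : h x * Real.exp (u x) / Z ≠ 0 :=
    div_ne_zero (mul_ne_zero (hh x) (Real.exp_ne_zero _)) hZ
  rw [relEnt_sub_relEnt M f hh tilt_ne_zero]
  simp only [log_mul_exp_div_div_self (hh _) hZ, mul_sub, Finset.sum_sub_distrib, Finset.sum_mul]

theorem sum_mul_exp_pos [Nonempty X] {h : X → ℝ} (hpos : ∀ x, 0 < h x) (u : X → ℝ) :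
    0 < ∑ x, h x * Real.exp (u x) :=
  Finset.sum_pos (fun x _ ↦ mul_pos (hpos x) (Real.exp_pos _)) Finset.univ_nonempty

theorem qVal_mul_const (q f : X → ℝ) (c : ℝ) : qVal (fun x ↦ q x * c) f = qVal q f * c := by
  simp only [qVal, Finset.sum_mul, mul_assoc]

theorem mw_relEnt_change_general [Nonempty X]
    (f h : X → ℝ) (_hf : ∀ x, 0 ≤ f x) (M : ℝ) (hM : 0 < M) (hfsum : ∑ x, f x = M)
    (hpos : ∀ x, 0 < h x) (q : X → ℝ) (c Z : ℝ)
    (hZ : Z = (1 / M) * ∑ x, h x * Real.exp (q x * c))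
    (h' : X → ℝ) (hh' : ∀ x, h' x = h x * Real.exp (q x * c) / Z) :
    relEnt M f h - relEnt M f h' = (c / M) * qVal q f - Real.log Z := by
  have Z_pos : 0 < Z := hZ ▸ mul_pos (one_div_pos.2 hM) (sum_mul_exp_pos hpos _)
  calc
    relEnt M f h - relEnt M f h'
    _ = (1 / M) * (qVal (fun x ↦ q x * c) f - M * Real.log Z) := by
      rw [funext hh', relEnt_sub_relEnt_mul_exp_div M f _ (fun x ↦ (hpos x).ne') Z_pos.ne',
        hfsum, qVal]
    _ = (c / M) * qVal q f - Real.log Z := by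
      rw [qVal_mul_const]
      field_simp

end RelEnt

/-- The change in relative entropy under one multiplicative-weights update equals
`(c/M)·q(f) - ln Z`. -/
theorem mw_relEnt_change {X : Type*} [Fintype X] [Nonempty X]
    (f h : X → ℝ) (hf : ∀ x, 0 ≤ f x) (M : ℝ) (hM : 0 < M)
    (hfsum : ∑ x : X, f x = M)
    (hpos : ∀ x, 0 < h x) (hsum : ∑ x : X, h x = M)
    (q : X → ℝ) (hq : ∀ x, q x = 0 ∨ q x = 1) (m : ℝ)
    (c Z : ℝ) (hc : c = (m - qVal q h) / (2 * M))
    (hZ : Z = (1 / M) * ∑ x : X, h x * Real.exp (q x * c))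
    (h' : X → ℝ) (hh' : ∀ x, h' x = h x * Real.exp (q x * c) / Z) :
    relEnt M f h - relEnt M f h' = (c / M) * qVal q f - Real.log Z :=
  mw_relEnt_change_general f h hf M hM hfsum hpos q c Z hZ h' hh'
end

section
/- Suppose |m − q(h)| ≤ 2M. Then one multiplicative-weights update decreases the relative entropy by at least Ψ(f,h) − Ψ(f,h') ≥ ((q(h) − q(f))/(2M))² − ((m − q(f))/(2M))². -/
theorem exp_mul_le_one_add_mul_add_sq {s t : ℝ} (hs : |s| ≤ 1) (ht : |t| ≤ 1) :
    Real.exp (s * t) ≤ 1 + s * t + t ^ 2 := by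
  have hst : |s * t| ≤ 1 := by
    rw [abs_mul]
    exact mul_le_one₀ hs (abs_nonneg t) ht
  have hexp : Real.exp (s * t) - 1 - s * t ≤ (s * t) ^ 2 :=
    (le_abs_self _).trans (Real.abs_exp_sub_one_sub_id_le hst)
  have hsq : (s * t) ^ 2 ≤ t ^ 2 := by
    rw [mul_pow]
    exact mul_le_of_le_one_left (sq_nonneg t) ((sq_le_one_iff_abs_le_one s).2 hs)
  linarith

section MultiplicativeWeights

variable {X : Type*} [Fintype X] {M c : ℝ} {f h q : X → ℝ}

/-- The normalising factor of the multiplicative-weights update with step `c`: the mean of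
`exp (c q)` under the dataset `h` of size `M`. -/
noncomputable def mwPartition (M : ℝ) (q h : X → ℝ) (c : ℝ) : ℝ :=
  (1 / M) * ∑ x : X, h x * Real.exp (q x * c)

/-- The multiplicative-weights update, with query `q` and step `c`, of a dataset `h` of size `M`.
The step aimed at a measured value `m` of the query is `c = (m - q(h)) / (2 M)`. -/
noncomputable def mwUpdate (M : ℝ) (q h : X → ℝ) (c : ℝ) (x : X) : ℝ :=
  h x * Real.exp (q x * c) / mwPartition M q h c

theorem mwPartition_pos (hM : 0 < M) (hh : ∀ x, 0 ≤ h x) (hsum : 0 < ∑ x, h x) :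
    0 < mwPartition M q h c := by
  obtain ⟨x, hx, hx_pos⟩ := (Finset.sum_pos_iff_of_nonneg fun x _ => hh x).1 hsum
  exact mul_pos (one_div_pos.2 hM) <| Finset.sum_pos'
    (fun y _ => mul_nonneg (hh y) (Real.exp_pos _).le) ⟨x, hx, mul_pos hx_pos (Real.exp_pos _)⟩

theorem mwPartition_le (hM : 0 < M) (hh : ∀ x, 0 ≤ h x) (hsum : ∑ x, h x = M)
    (hq : ∀ x, |q x| ≤ 1) (hc : |c| ≤ 1) :
    mwPartition M q h c ≤ 1 + qVal q h / M * c + c ^ 2 :=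
  calc
    mwPartition M q h c ≤ (1 / M) * ∑ x, h x * (1 + q x * c + c ^ 2) := by
      unfold mwPartition
      gcongr with x
      · exact hh x
      · exact exp_mul_le_one_add_mul_add_sq (hq x) hc
    _ = (1 / M) * (M + qVal q h * c + M * c ^ 2) := by
      simp only [qVal, mul_add, mul_one, ← mul_assoc, Finset.sum_add_distrib, ← Finset.sum_mul,
        hsum]
    _ = 1 + qVal q h / M * c + c ^ 2 := by
      field_simp

theorem log_mwPartition_le (hM : 0 < M) (hh : ∀ x, 0 ≤ h x) (hsum : ∑ x, h x = M)
    (hq : ∀ x, |q x| ≤ 1) (hc : |c| ≤ 1) :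
    Real.log (mwPartition M q h c) ≤ qVal q h / M * c + c ^ 2 := by
  have hlog := Real.log_le_sub_one_of_pos
    (mwPartition_pos (q := q) (c := c) hM hh (hsum.symm ▸ hM))
  linarith [mwPartition_le hM hh hsum hq hc]

theorem log_div_sub_log_div_mwUpdate {a : ℝ} {x : X} (ha : a ≠ 0) (hh : h x ≠ 0)
    (hZ : mwPartition M q h c ≠ 0) :
    Real.log (a / h x) - Real.log (a / mwUpdate M q h c x) =
      q x * c - Real.log (mwPartition M q h c) := by
  have hexp : Real.exp (q x * c) ≠ 0 := Real.exp_ne_zero _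
  have hnum : h x * Real.exp (q x * c) ≠ 0 := mul_ne_zero hh hexp
  rw [mwUpdate, Real.log_div ha hh, Real.log_div ha (div_ne_zero hnum hZ), Real.log_div hnum hZ,
    Real.log_mul hh hexp, Real.log_exp]
  ring

theorem relEnt_sub_relEnt_mwUpdate (hf : ∀ x, 0 ≤ f x) (hfsum : ∑ x, f x = M)
    (hfh : ∀ x, 0 < f x → 0 < h x) (hZ : mwPartition M q h c ≠ 0) :
    relEnt M f h - relEnt M f (mwUpdate M q h c) =
      qVal q f / M * c - Real.log (mwPartition M q h c) := by
  have hM : M ≠ 0 := by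
    rintro rfl
    simp [mwPartition] at hZ
  have hterm (x : X) :
      f x * Real.log (f x / h x) - f x * Real.log (f x / mwUpdate M q h c x) =
        f x * (q x * c - Real.log (mwPartition M q h c)) := by
    rcases (hf x).eq_or_lt with hx | hx
    · simp [← hx]
    · rw [← mul_sub, log_div_sub_log_div_mwUpdate hx.ne' (hfh x hx).ne' hZ]
  calc
    relEnt M f h - relEnt M f (mwUpdate M q h c) =
        (1 / M) * ∑ x, f x * (q x * c - Real.log (mwPartition M q h c)) := by
      simp only [relEnt, ← mul_sub, ← Finset.sum_sub_distrib, hterm]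
    _ = (1 / M) * (qVal q f * c - M * Real.log (mwPartition M q h c)) := by
      simp only [qVal, mul_sub, ← mul_assoc, Finset.sum_sub_distrib, ← Finset.sum_mul, hfsum]
    _ = qVal q f / M * c - Real.log (mwPartition M q h c) := by
      field_simp

theorem le_relEnt_sub_relEnt_mwUpdate (hM : 0 < M) (hf : ∀ x, 0 ≤ f x) (hfsum : ∑ x, f x = M)
    (hh : ∀ x, 0 ≤ h x) (hsum : ∑ x, h x = M) (hfh : ∀ x, 0 < f x → 0 < h x)
    (hq : ∀ x, |q x| ≤ 1) (hc : |c| ≤ 1) :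
    (qVal q f / M - qVal q h / M) * c - c ^ 2 ≤
      relEnt M f h - relEnt M f (mwUpdate M q h c) := by
  rw [relEnt_sub_relEnt_mwUpdate hf hfsum hfh (mwPartition_pos hM hh (hsum.symm ▸ hM)).ne']
  linarith [log_mwPartition_le hM hh hsum hq hc]

theorem mw_relEnt_progress_general (hM : 0 < M) (hf : ∀ x, 0 ≤ f x) (hfsum : ∑ x, f x = M)
    (hh : ∀ x, 0 ≤ h x) (hsum : ∑ x, h x = M) (hfh : ∀ x, 0 < f x → 0 < h x)
    (hq : ∀ x, |q x| ≤ 1) {m : ℝ} (hm : |m - qVal q h| ≤ 2 * M) :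
    relEnt M f h - relEnt M f (mwUpdate M q h ((m - qVal q h) / (2 * M))) ≥
      ((qVal q h - qVal q f) / (2 * M)) ^ 2 - ((m - qVal q f) / (2 * M)) ^ 2 := by
  have h2M : 0 < 2 * M := by positivity
  have hstep : |(m - qVal q h) / (2 * M)| ≤ 1 := by
    rw [abs_div, abs_of_pos h2M]
    exact (div_le_one h2M).2 hm
  have hsquare :
      ((qVal q h - qVal q f) / (2 * M)) ^ 2 - ((m - qVal q f) / (2 * M)) ^ 2 =
        (qVal q f / M - qVal q h / M) * ((m - qVal q h) / (2 * M)) -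
          ((m - qVal q h) / (2 * M)) ^ 2 := by
    field_simp
    ring
  rw [hsquare]
  exact le_relEnt_sub_relEnt_mwUpdate hM hf hfsum hh hsum hfh hq hstep

end MultiplicativeWeights

/-- One multiplicative-weights update decreases the relative entropy by at least
`((q(h) - q(f))/(2M))² - ((m - q(f))/(2M))²`. -/
theorem mw_relEnt_progress {X : Type*} [Fintype X] [Nonempty X]
    (f h : X → ℝ) (hf : ∀ x, 0 ≤ f x) (M : ℝ) (hM : 0 < M)
    (hfsum : ∑ x : X, f x = M)
    (hpos : ∀ x, 0 < h x) (hsum : ∑ x : X, h x = M)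
    (q : X → ℝ) (hq : ∀ x, q x = 0 ∨ q x = 1) (m : ℝ)
    (hm : |m - qVal q h| ≤ 2 * M)
    (c Z : ℝ) (hc : c = (m - qVal q h) / (2 * M))
    (hZ : Z = (1 / M) * ∑ x : X, h x * Real.exp (q x * c))
    (h' : X → ℝ) (hh' : ∀ x, h' x = h x * Real.exp (q x * c) / Z) :
    relEnt M f h - relEnt M f h' ≥
      ((qVal q h - qVal q f) / (2 * M)) ^ 2 - ((m - qVal q f) / (2 * M)) ^ 2 := by
  subst hc hZ
  obtain rfl : h' = mwUpdate M q h ((m - qVal q h) / (2 * M)) := funext hh'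
  exact mw_relEnt_progress_general hM hf hfsum (fun x => (hpos x).le) hsum (fun x _ => hpos x)
    (fun x => by rcases hq x with hx | hx <;> simp [hx]) hm
end
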